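/- For each k ≥ 1 and |q| < 1: Σ_{λ: l(λ) ≤ k} q^{|λ| + n_2(λ) - λ_1} / ((-q;q)_{λ_k} (q;q)_λ) = (q^{2k+2}, q^{2k}, q^2; q^{2k+2})_∞ / (q;q)_∞. -/

import Mathlib

/-- Finite q-Pochhammer symbol `(x;q)_n = ∏_{k=0}^{n-1} (1 - x q^k)`. -/
noncomputable def qPoch (x q : ℂ) (n : ℕ) : ℂ := ∏ k ∈ Finset.range n, (1 - x * q ^ k)

/-- Infinite q-Pochhammer symbol `(x;q)_∞ = ∏_{k≥0} (1 - x q^k)`. -/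
noncomputable def qPochInf (x q : ℂ) : ℂ := ∏' k : ℕ, (1 - x * q ^ k)

/-- Partitions with at most `k` (positive) parts: antitone sequences of naturals vanishing
from index `k` on; `l 0` is the largest part `λ_1`, and `l (k-1)` is `λ_k`. -/
def PartK (k : ℕ) : Type := {l : ℕ → ℕ // Antitone l ∧ ∀ i, k ≤ i → l i = 0}

/-- `|λ| = Σ_i λ_i`. -/
def wtK (k : ℕ) (l : PartK k) : ℕ := ∑ i ∈ Finset.range k, l.1 i

/-- `n_2(λ) = Σ_i λ_i^2`. -/
def n2K (k : ℕ) (l : PartK k) : ℕ := ∑ i ∈ Finset.range k, (l.1 i) ^ 2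

/-- `n(λ) = Σ_i binom(λ_i, 2)`. -/
def nK (k : ℕ) (l : PartK k) : ℕ := ∑ i ∈ Finset.range k, Nat.choose (l.1 i) 2

/-- `(x;q)_λ = ∏_{i=1}^{k} (x;q)_{λ_i - λ_{i+1}}` (with `λ_{k+1} = 0`). -/
noncomputable def pochK (x q : ℂ) (k : ℕ) (l : PartK k) : ℂ :=
  ∏ i ∈ Finset.range k, qPoch x q (l.1 i - l.1 (i + 1))

/-!
Since `(-q;q)_n (q;q)_n = (q²;q²)_n`, the sum over partitions with largest part `n` is the
`(k-1)`-fold Bailey transform of `β_n = 1 / (q²;q²)_n`. This sequence belongs to the bilateral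
Bailey pair `β_n = ∑_{r ∈ ℤ} (-1)^r q^{r²} / ((q;q)_{n-r} (q;q)_{n+1+r})` relative to `a = q`. Each
step of the chain multiplies the coefficient of index `r` by `q^{r²+r}`. The reflection
`r ↦ -1 - r` then turns the resulting pair into one relative to `a = 1` with the same coefficients,
for which the last sum, with weight `q^{n²}`, is a theta series; Jacobi's triple product evaluates
it.
-/

open Filter Topology

section Reciprocal

/-- The reciprocal `1 / (q;q)_m`, extended by `0` to negative `m`. With this convention the
bilateral sums below are finite without an explicit range of summation. -/
noncomputable def invQPoch (q : ℂ) (m : ℤ) : ℂ := if m < 0 then 0 else (qPoch q q m.toNat)⁻¹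

variable {q : ℂ}

lemma invQPoch_of_neg (q : ℂ) {m : ℤ} (hm : m < 0) : invQPoch q m = 0 := if_pos hm

lemma invQPoch_natCast (q : ℂ) (n : ℕ) : invQPoch q n = (qPoch q q n)⁻¹ := by simp [invQPoch]

lemma invQPoch_zero (q : ℂ) : invQPoch q 0 = 1 := by simp [invQPoch, qPoch]

lemma qPoch_succ (x q : ℂ) (n : ℕ) : qPoch x q (n + 1) = qPoch x q n * (1 - x * q ^ n) :=
  Finset.prod_range_succ _ _

lemma one_sub_pow_succ_ne_zero {R : Type*} [Ring R] {x : R} (hx : ¬IsOfFinOrder x) (n : ℕ) :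
    1 - x ^ (n + 1) ≠ 0 :=
  fun h => hx (isOfFinOrder_iff_pow_eq_one.2 ⟨n + 1, n.succ_pos, (sub_eq_zero.1 h).symm⟩)

lemma qPoch_self_ne_zero (hq : ¬IsOfFinOrder q) (n : ℕ) : qPoch q q n ≠ 0 :=
  Finset.prod_ne_zero_iff.2 fun i _ => by
    simpa only [← pow_succ'] using one_sub_pow_succ_ne_zero hq i

lemma one_sub_zpow_mul_invQPoch (hq : ¬IsOfFinOrder q) (m : ℤ) :
    (1 - q ^ m) * invQPoch q m = invQPoch q (m - 1) := by
  rcases lt_trichotomy m 0 with hm | rfl | hm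
  · rw [invQPoch_of_neg q hm, invQPoch_of_neg q (by omega), mul_zero]
  · simp [invQPoch_of_neg]
  · obtain ⟨n, rfl⟩ : ∃ n : ℕ, m = (n + 1 : ℕ) := ⟨(m - 1).toNat, by omega⟩
    have hn := qPoch_self_ne_zero hq n
    have hfactor := one_sub_pow_succ_ne_zero hq n
    rw [zpow_natCast, invQPoch_natCast, qPoch_succ, Nat.cast_succ, add_sub_cancel_right,
      invQPoch_natCast, ← pow_succ']
    field_simp

lemma inv_qPoch_neg_mul_qPoch (q : ℂ) (n : ℕ) :
    (qPoch (-q) q n * qPoch q q n)⁻¹ = invQPoch (q ^ 2) n := by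
  rw [invQPoch_natCast, qPoch, qPoch, qPoch, ← Finset.prod_mul_distrib]
  congr 1
  exact Finset.prod_congr rfl fun i _ => by ring

end Reciprocal

section Limits

variable {q : ℂ}

lemma not_isOfFinOrder_of_norm_lt_one {𝕜 : Type*} [NormedDivisionRing 𝕜] {x : 𝕜} (hx : ‖x‖ < 1) :
    ¬IsOfFinOrder x :=
  fun h => hx.ne h.norm_eq_one

lemma norm_pow_lt_one {𝕜 : Type*} [NormedDivisionRing 𝕜] {x : 𝕜} (hx : ‖x‖ < 1) {n : ℕ}
    (hn : n ≠ 0) : ‖x ^ n‖ < 1 := by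
  rw [norm_pow]
  exact pow_lt_one₀ (norm_nonneg x) hx hn

lemma norm_pow_le_of_le {𝕜 : Type*} [NormedDivisionRing 𝕜] {x : 𝕜} (hx : ‖x‖ ≤ 1) {m n : ℕ}
    (hmn : m ≤ n) : ‖x ^ n‖ ≤ ‖x‖ ^ m := by
  rw [norm_pow]
  exact pow_le_pow_of_le_one (norm_nonneg x) hx hmn

lemma norm_zpow_sq_le_one {𝕜 : Type*} [NormedDivisionRing 𝕜] {x : 𝕜} (hx : ‖x‖ ≤ 1) (r : ℤ) :
    ‖x ^ (r ^ 2)‖ ≤ 1 := by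
  rw [← Int.natAbs_sq, ← Nat.cast_pow, zpow_natCast, norm_pow]
  exact pow_le_one₀ (norm_nonneg x) hx

lemma summable_norm_qPoch_factor (hq : ‖q‖ < 1) (x : ℂ) :
    Summable fun n : ℕ => ‖-(x * q ^ n)‖ := by
  simpa only [norm_neg, norm_mul, norm_pow] using
    (summable_geometric_of_lt_one (norm_nonneg q) hq).mul_left ‖x‖

lemma tendsto_qPoch (hq : ‖q‖ < 1) (x : ℂ) :
    Tendsto (qPoch x q) atTop (𝓝 (qPochInf x q)) := by
  change Tendsto (fun n => ∏ k ∈ Finset.range n, (1 - x * q ^ k)) _ (𝓝 (∏' k : ℕ, _))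
  simpa only [← sub_eq_add_neg] using
    (multipliable_one_add_of_summable (summable_norm_qPoch_factor hq x)).tendsto_prod_tprod_nat

lemma qPochInf_self_ne_zero (hq : ‖q‖ < 1) : qPochInf q q ≠ 0 := by
  have hfactor (n : ℕ) : 1 + -(q * q ^ n) ≠ 0 := by
    rw [← pow_succ', ← sub_eq_add_neg]
    exact one_sub_pow_succ_ne_zero (not_isOfFinOrder_of_norm_lt_one hq) n
  simpa only [qPochInf, sub_eq_add_neg] using
    tprod_one_add_ne_zero_of_summable hfactor (summable_norm_qPoch_factor hq q)

lemma tendsto_invQPoch (hq : ‖q‖ < 1) :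
    Tendsto (invQPoch q) atTop (𝓝 (qPochInf q q)⁻¹) := by
  have htoNat : Tendsto Int.toNat atTop atTop :=
    tendsto_atTop.2 fun b => (eventually_ge_atTop (b : ℤ)).mono fun m hm => by omega
  refine (((tendsto_qPoch hq q).inv₀ (qPochInf_self_ne_zero hq)).comp htoNat).congr' ?_
  filter_upwards [eventually_ge_atTop 0] with m hm
  exact (if_neg hm.not_gt).symm

lemma tendsto_invQPoch_natCast_add (hq : ‖q‖ < 1) (a : ℤ) :
    Tendsto (fun n : ℕ => invQPoch q (n + a)) atTop (𝓝 (qPochInf q q)⁻¹) :=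
  (tendsto_invQPoch hq).comp (tendsto_atTop_add_const_right _ a tendsto_natCast_atTop_atTop)

lemma tendsto_invQPoch_natCast_sub (hq : ‖q‖ < 1) (a : ℤ) :
    Tendsto (fun n : ℕ => invQPoch q (n - a)) atTop (𝓝 (qPochInf q q)⁻¹) := by
  simpa only [sub_eq_add_neg] using tendsto_invQPoch_natCast_add hq (-a)

lemma exists_norm_invQPoch_le (hq : ‖q‖ < 1) : ∃ C, ∀ m, ‖invQPoch q m‖ ≤ C := by
  obtain ⟨C, hC⟩ := (Metric.isBounded_range_of_tendsto _
    (tendsto_invQPoch_natCast_add hq 0)).exists_norm_le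
  refine ⟨C, fun m => ?_⟩
  rcases lt_or_ge m 0 with hm | hm
  · rw [invQPoch_of_neg q hm, norm_zero]
    exact (norm_nonneg _).trans (hC _ ⟨0, rfl⟩)
  · lift m to ℕ using hm
    exact hC _ ⟨m, by simp only [add_zero]⟩

end Limits

section BilateralSum

/-- The bilateral sum `∑_r α_r / ((q;q)_{a-r} (q;q)_{b+r})`. For `b = a + s` it expresses the
relation between the two members of a Bailey pair relative to `q^s`, unfolded over all of `ℤ`. -/
noncomputable def bilateralSum (q : ℂ) (α : ℤ → ℂ) (a b : ℤ) : ℂ :=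
  ∑' r : ℤ, α r * (invQPoch q (a - r) * invQPoch q (b + r))

variable {q : ℂ} {α : ℤ → ℂ}

lemma invQPoch_mul_invQPoch_eq_zero (q : ℂ) {a b r : ℤ} (hr : r ∉ Finset.Icc (-b) a) :
    invQPoch q (a - r) * invQPoch q (b + r) = 0 := by
  rw [Finset.mem_Icc, not_and_or] at hr
  rcases hr with hr | hr
  · rw [invQPoch_of_neg q (by omega : b + r < 0), mul_zero]
  · rw [invQPoch_of_neg q (by omega : a - r < 0), zero_mul]

lemma summable_bilateralSum (q : ℂ) (α : ℤ → ℂ) (a b : ℤ) :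
    Summable fun r : ℤ => α r * (invQPoch q (a - r) * invQPoch q (b + r)) :=
  summable_of_ne_finset_zero (s := Finset.Icc (-b) a) fun _ hr => by
    rw [invQPoch_mul_invQPoch_eq_zero q hr, mul_zero]

lemma bilateralSum_add (q : ℂ) (α α' : ℤ → ℂ) (a b : ℤ) :
    bilateralSum q (fun r => α r + α' r) a b = bilateralSum q α a b + bilateralSum q α' a b := by
  simp only [bilateralSum, add_mul]
  exact (summable_bilateralSum q α a b).tsum_add (summable_bilateralSum q α' a b)

lemma bilateralSum_const_mul (q c : ℂ) (α : ℤ → ℂ) (a b : ℤ) :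
    bilateralSum q (fun r => c * α r) a b = c * bilateralSum q α a b := by
  simp only [bilateralSum, mul_assoc, tsum_mul_left]

lemma bilateralSum_of_add_neg (q : ℂ) (α : ℤ → ℂ) {a b : ℤ} (hab : a + b < 0) :
    bilateralSum q α a b = 0 := by
  refine (tsum_congr fun r => ?_).trans tsum_zero
  rw [invQPoch_mul_invQPoch_eq_zero q (by rw [Finset.mem_Icc]; omega), mul_zero]

lemma bilateralSum_zero_zero (q : ℂ) (α : ℤ → ℂ) : bilateralSum q α 0 0 = α 0 := by
  rw [bilateralSum, tsum_eq_single 0]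
  · simp [invQPoch_zero]
  · intro r hr
    rw [invQPoch_mul_invQPoch_eq_zero q (by rw [Finset.mem_Icc]; omega), mul_zero]

lemma bilateralSum_shift (q : ℂ) (α : ℤ → ℂ) (a b : ℤ) :
    bilateralSum q (fun r => α (r + 1)) a b = bilateralSum q α (a + 1) (b - 1) := by
  refine Eq.trans (tsum_congr fun r => ?_) ((Equiv.addRight (1 : ℤ)).tsum_eq _)
  simp only [Equiv.coe_addRight, add_sub_add_right_eq_sub,
    show b - 1 + (r + 1) = b + r by ring]

lemma bilateralSum_reflect (q : ℂ) (α : ℤ → ℂ) (a b s : ℤ) :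
    bilateralSum q (fun r => α (s - r)) a b = bilateralSum q α (b + s) (a - s) := by
  rw [bilateralSum, bilateralSum, ← (Equiv.subLeft s).tsum_eq]
  refine tsum_congr fun r => ?_
  rw [Equiv.subLeft_apply, sub_sub_cancel, mul_comm (invQPoch q _), ← add_sub_assoc,
    show a - (s - r) = a - s + r by ring]

lemma bilateralSum_eq_zero_of_antisymm (s : ℤ) (hα : ∀ r, α (s - r) = -α r) (n : ℤ) :
    bilateralSum q α n (n - s) = 0 := by
  have hreflect := bilateralSum_reflect q α n (n - s) s
  simp only [hα, ← neg_one_mul (α _), bilateralSum_const_mul, sub_add_cancel] at hreflect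
  linear_combination -hreflect / 2

lemma bilateralSum_sub_one_right (hq : ¬IsOfFinOrder q) (hq0 : q ≠ 0) (α : ℤ → ℂ) (a b : ℤ) :
    bilateralSum q α a (b - 1) =
      bilateralSum q α a b + -q ^ b * bilateralSum q (fun r => α r * q ^ r) a b := by
  rw [← bilateralSum_const_mul, ← bilateralSum_add]
  refine tsum_congr fun r => ?_
  rw [show b - 1 + r = b + r - 1 by ring, ← one_sub_zpow_mul_invQPoch hq (b + r), zpow_add₀ hq0]
  ring

lemma one_sub_zpow_mul_bilateralSum (hq : ¬IsOfFinOrder q) (hq0 : q ≠ 0) (α : ℤ → ℂ) (a b : ℤ) :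
    (1 - q ^ (a + b)) * bilateralSum q α a b =
      bilateralSum q (fun r => α r + q ^ (a - (r + 1)) * α (r + 1)) (a - 1) b := by
  rw [bilateralSum_add, bilateralSum_shift q (fun r => q ^ (a - r) * α r), sub_add_cancel,
    bilateralSum, bilateralSum, bilateralSum, ← tsum_mul_left,
    ← (summable_bilateralSum q _ _ _).tsum_add (summable_bilateralSum q _ _ _)]
  refine tsum_congr fun r => ?_
  -- `1 - q^(a+b) = (1 - q^(a-r)) + q^(a-r) (1 - q^(b+r))`
  have hsplit : q ^ (a + b) = q ^ (a - r) * q ^ (b + r) := by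
    rw [← zpow_add₀ hq0, sub_add_add_cancel]
  rw [show a - 1 - r = a - r - 1 by ring, show b - 1 + r = b + r - 1 by ring,
    ← one_sub_zpow_mul_invQPoch hq (a - r), ← one_sub_zpow_mul_invQPoch hq (b + r), hsplit]
  ring

lemma norm_bilateralSum_le {C : ℝ} (hC : ∀ m, ‖invQPoch q m‖ ≤ C)
    (hα : Summable fun r => ‖α r‖) (a b : ℤ) :
    ‖bilateralSum q α a b‖ ≤ (∑' r, ‖α r‖) * (C * C) := by
  refine tsum_of_norm_bounded (hα.hasSum.mul_right (C * C)) fun r => ?_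
  rw [norm_mul, norm_mul (invQPoch q _)]
  have hC0 := (norm_nonneg _).trans (hC 0)
  gcongr <;> apply hC

lemma tendsto_bilateralSum (hq : ‖q‖ < 1) (hα : Summable fun r => ‖α r‖) :
    Tendsto (fun n : ℕ => bilateralSum q α n n) atTop
      (𝓝 ((∑' r, α r) * ((qPochInf q q)⁻¹ * (qPochInf q q)⁻¹))) := by
  obtain ⟨C, hC⟩ := exists_norm_invQPoch_le hq
  have hC0 := (norm_nonneg _).trans (hC 0)
  rw [← tsum_mul_right]
  refine tendsto_tsum_of_dominated_convergence (hα.mul_right (C * C)) (fun r => ?_)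
    (Eventually.of_forall fun n r => ?_)
  · exact ((tendsto_invQPoch_natCast_sub hq r).mul
      (tendsto_invQPoch_natCast_add hq r)).const_mul (α r)
  · rw [norm_mul, norm_mul (invQPoch q _)]
    gcongr <;> apply hC

end BilateralSum

section BaileyLemma

variable {q : ℂ}

lemma bilateralSum_qVandermonde (hq : ¬IsOfFinOrder q) (hq0 : q ≠ 0) (N m : ℤ) :
    bilateralSum q (fun i => q ^ (i ^ 2 + m * i) * invQPoch q (i + m)) N 0 =
      invQPoch q N * invQPoch q (N + m) := by
  rcases lt_or_ge N 0 with hN | hN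
  · rw [bilateralSum_of_add_neg q _ (by omega), invQPoch_of_neg q hN, zero_mul]
  lift N to ℕ using hN
  induction N generalizing m with
  | zero => simp [bilateralSum_zero_zero, invQPoch_zero]
  | succ N ih =>
    have hcoeff (i : ℤ) : q ^ ((N + 1 : ℕ) - (i + 1) : ℤ) *
        (q ^ ((i + 1) ^ 2 + m * (i + 1)) * invQPoch q (i + 1 + m)) =
        q ^ (N + 1 + m : ℤ) * (q ^ (i ^ 2 + (m + 1) * i) * invQPoch q (i + (m + 1))) := by
      rw [← mul_assoc, ← mul_assoc, ← zpow_add₀ hq0, ← zpow_add₀ hq0, add_right_comm, add_assoc i]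
      congr 2
      push_cast
      ring
    have hrec := one_sub_zpow_mul_bilateralSum hq hq0
      (fun i => q ^ (i ^ 2 + m * i) * invQPoch q (i + m)) (N + 1 : ℕ) 0
    simp only [hcoeff] at hrec
    rw [bilateralSum_add, bilateralSum_const_mul, Nat.cast_succ, add_sub_cancel_right, ih, ih,
      add_zero] at hrec
    have hN := one_sub_zpow_mul_invQPoch hq (N + 1)
    have hNm := one_sub_zpow_mul_invQPoch hq (N + 1 + m)
    rw [add_sub_cancel_right] at hN
    rw [show (N : ℤ) + 1 + m - 1 = N + m by ring] at hNm
    rw [show (N : ℤ) + (m + 1) = N + 1 + m by ring, ← hN, ← hNm] at hrec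
    refine mul_left_cancel₀ (one_sub_pow_succ_ne_zero hq N) ?_
    rw [← zpow_natCast, Nat.cast_succ, hrec]
    ring

lemma tsum_bailey_kernel (hq : ¬IsOfFinOrder q) (hq0 : q ≠ 0) (s n r : ℤ) :
    ∑' j : ℤ, q ^ (j ^ 2 + s * j) * invQPoch q (n - j) *
        (invQPoch q (j - r) * invQPoch q (j + s + r)) =
      q ^ (r ^ 2 + s * r) * (invQPoch q (n - r) * invQPoch q (n + s + r)) := by
  rw [← (Equiv.addRight r).tsum_eq, show n + s + r = n - r + (2 * r + s) by ring,
    ← bilateralSum_qVandermonde hq hq0, bilateralSum, ← tsum_mul_left]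
  refine tsum_congr fun i => ?_
  rw [Equiv.coe_addRight, add_sub_cancel_right, zero_add,
    show (i + r) ^ 2 + s * (i + r) = r ^ 2 + s * r + (i ^ 2 + (2 * r + s) * i) by ring,
    zpow_add₀ hq0, show n - (i + r) = n - r - i by ring,
    show i + r + s + r = i + (2 * r + s) by ring]
  ring

theorem bailey_lemma (hq : ¬IsOfFinOrder q) (hq0 : q ≠ 0) (α : ℤ → ℂ) (s n : ℤ) :
    ∑' j : ℤ, q ^ (j ^ 2 + s * j) * invQPoch q (n - j) * bilateralSum q α j (j + s) =
      bilateralSum q (fun r => q ^ (r ^ 2 + s * r) * α r) n (n + s) := by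
  have hsummable : Summable (Function.uncurry fun j r : ℤ => α r * (q ^ (j ^ 2 + s * j) *
      invQPoch q (n - j) * (invQPoch q (j - r) * invQPoch q (j + s + r)))) := by
    refine summable_of_ne_finset_zero
      (s := Finset.Icc (-(n + s)) n ×ˢ Finset.Icc (-(n + s)) n) fun ⟨j, r⟩ hjr => ?_
    rcases lt_or_ge n j with hj | hj
    · simp [invQPoch_of_neg q (by omega : n - j < 0)]
    · rw [Finset.mem_product, Finset.mem_Icc, Finset.mem_Icc] at hjr
      simp [invQPoch_mul_invQPoch_eq_zero q (by rw [Finset.mem_Icc]; omega :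
        r ∉ Finset.Icc (-(j + s)) j)]
  calc _ = ∑' j : ℤ, ∑' r : ℤ, α r * (q ^ (j ^ 2 + s * j) * invQPoch q (n - j) *
        (invQPoch q (j - r) * invQPoch q (j + s + r))) := by
        refine tsum_congr fun j => ?_
        rw [bilateralSum, ← tsum_mul_left]
        exact tsum_congr fun r => by ring
    _ = ∑' r : ℤ, α r * ∑' j : ℤ, q ^ (j ^ 2 + s * j) * invQPoch q (n - j) *
        (invQPoch q (j - r) * invQPoch q (j + s + r)) := by
        rw [← hsummable.tsum_comm]
        simp only [tsum_mul_left]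
    _ = _ := by
        refine tsum_congr fun r => ?_
        rw [tsum_bailey_kernel hq hq0]
        ring

lemma bailey_lemma_nat (hq : ¬IsOfFinOrder q) (hq0 : q ≠ 0) (α : ℤ → ℂ) {s : ℕ} (hs : s ≤ 1)
    (n : ℤ) :
    ∑' j : ℕ, q ^ (j ^ 2 + s * j) * invQPoch q (n - j) * bilateralSum q α j (j + s) =
      bilateralSum q (fun r => q ^ (r ^ 2 + s * r) * α r) n (n + s) := by
  rw [← bailey_lemma hq hq0, ← Nat.cast_injective.tsum_eq (β := ℤ)]
  · refine tsum_congr fun j => ?_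
    rw [← zpow_natCast]
    push_cast
    rfl
  · refine Function.support_subset_iff'.2 fun j hj => ?_
    have hj_neg : j < 0 := by
      by_contra! hj0
      exact hj ⟨j.toNat, Int.toNat_of_nonneg hj0⟩
    rw [bilateralSum_of_add_neg q α (by omega), mul_zero]

end BaileyLemma

section Theta

/-- The term `(-1)^r t^r p^{r²}` of the bilateral theta series. -/
noncomputable def thetaTerm (t p : ℂ) (r : ℤ) : ℂ := (-1) ^ r * t ^ r * p ^ (r ^ 2)

variable {t p : ℂ}

lemma thetaTerm_zero (t p : ℂ) : thetaTerm t p 0 = 1 := by simp [thetaTerm]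

lemma thetaTerm_ne_zero (ht : t ≠ 0) (hp0 : p ≠ 0) (r : ℤ) : thetaTerm t p r ≠ 0 :=
  mul_ne_zero (mul_ne_zero (zpow_ne_zero r (by norm_num)) (zpow_ne_zero r ht)) (zpow_ne_zero _ hp0)

lemma thetaTerm_add_one (ht : t ≠ 0) (hp0 : p ≠ 0) (r : ℤ) :
    thetaTerm t p (r + 1) = -(t * p ^ (2 * r + 1)) * thetaTerm t p r := by
  rw [thetaTerm, thetaTerm, zpow_add_one₀ (by norm_num), zpow_add_one₀ ht,
    show (r + 1) ^ 2 = 2 * r + 1 + r ^ 2 by ring, zpow_add₀ hp0]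
  ring

lemma thetaTerm_neg (t p : ℂ) (r : ℤ) : thetaTerm t p (-r) = thetaTerm t⁻¹ p r := by
  rw [thetaTerm, thetaTerm, neg_sq, zpow_neg, ← inv_zpow, inv_neg_one, zpow_neg, inv_zpow]

lemma thetaTerm_self_antisymm (hp0 : p ≠ 0) (r : ℤ) :
    thetaTerm p p (-1 - r) = -thetaTerm p p r := by
  rw [thetaTerm, thetaTerm, mul_assoc, mul_assoc, ← zpow_add₀ hp0, ← zpow_add₀ hp0,
    show -1 - r + (-1 - r) ^ 2 = r + r ^ 2 by ring, zpow_sub₀ (by norm_num), ← neg_mul,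
    zpow_neg_one, inv_neg_one, div_eq_mul_inv, ← inv_zpow, inv_neg_one, neg_one_mul]

lemma summable_thetaTerm_natCast (ht : t ≠ 0) (hp0 : p ≠ 0) (hp : ‖p‖ < 1) :
    Summable fun n : ℕ => ‖thetaTerm t p n‖ := by
  have hratio (n : ℕ) :
      ‖‖thetaTerm t p (n + 1 : ℕ)‖‖ / ‖‖thetaTerm t p n‖‖ = ‖t * p‖ * (‖p‖ ^ 2) ^ n := by
    rw [Nat.cast_succ, thetaTerm_add_one ht hp0, norm_norm, norm_norm, norm_mul,
      mul_div_cancel_right₀ _ (norm_ne_zero_iff.2 (thetaTerm_ne_zero ht hp0 n)), norm_neg,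
      zpow_add_one₀ hp0, zpow_mul, zpow_natCast, norm_mul, norm_mul, norm_mul, norm_pow]
    norm_cast
    rw [norm_pow]
    ring
  refine summable_of_ratio_test_tendsto_lt_one zero_lt_one
    (Eventually.of_forall fun n => norm_ne_zero_iff.2 (thetaTerm_ne_zero ht hp0 n)) ?_
  simp only [hratio]
  simpa only [mul_zero] using (tendsto_pow_atTop_nhds_zero_of_lt_one (sq_nonneg _)
    (pow_lt_one₀ (norm_nonneg p) hp two_ne_zero)).const_mul ‖t * p‖

lemma summable_norm_thetaTerm (ht : t ≠ 0) (hp0 : p ≠ 0) (hp : ‖p‖ < 1) :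
    Summable fun r => ‖thetaTerm t p r‖ := by
  refine Summable.of_nat_of_neg (summable_thetaTerm_natCast ht hp0 hp) ?_
  simpa only [thetaTerm_neg] using summable_thetaTerm_natCast (inv_ne_zero ht) hp0 hp

lemma one_sub_zpow_mul_bilateralSum_thetaTerm (hp : ¬IsOfFinOrder p) (hp0 : p ≠ 0) (ht : t ≠ 0)
    (a b : ℤ) :
    (1 - (p ^ 2) ^ (a + b)) * bilateralSum (p ^ 2) (thetaTerm t p) a b =
      (1 - t * p ^ (2 * a - 1)) * bilateralSum (p ^ 2) (thetaTerm t p) (a - 1) b := by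
  have hcoeff (r : ℤ) : thetaTerm t p r + (p ^ 2) ^ (a - (r + 1)) * thetaTerm t p (r + 1) =
      (1 - t * p ^ (2 * a - 1)) * thetaTerm t p r := by
    have hexp : p ^ (2 * a - 1) = (p ^ 2) ^ (a - (r + 1)) * p ^ (2 * r + 1) := by
      rw [← zpow_natCast, ← zpow_mul, ← zpow_add₀ hp0]
      congr 1
      push_cast
      ring
    rw [thetaTerm_add_one ht hp0, hexp]
    ring
  have hsq : ¬IsOfFinOrder (p ^ 2) := by simpa [isOfFinOrder_pow] using hp
  rw [one_sub_zpow_mul_bilateralSum hsq (pow_ne_zero 2 hp0)]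
  simp only [hcoeff, bilateralSum_const_mul]

lemma bilateralSum_thetaTerm_swap (q t p : ℂ) (a b : ℤ) :
    bilateralSum q (thetaTerm t p) a b = bilateralSum q (thetaTerm t⁻¹ p) b a := by
  simpa only [zero_sub, thetaTerm_neg, inv_inv, add_zero, sub_zero] using
    bilateralSum_reflect q (thetaTerm t⁻¹ p) a b 0

lemma qPoch_mul_bilateralSum_thetaTerm (hp : ¬IsOfFinOrder p) (hp0 : p ≠ 0) (ht : t ≠ 0) (n : ℕ) :
    qPoch (p ^ 2) (p ^ 2) (2 * n) * bilateralSum (p ^ 2) (thetaTerm t p) n n =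
      qPoch (t * p) (p ^ 2) n * qPoch (t⁻¹ * p) (p ^ 2) n := by
  induction n with
  | zero => simp [qPoch, bilateralSum_zero_zero, thetaTerm_zero]
  | succ n ih =>
    have hleft := one_sub_zpow_mul_bilateralSum_thetaTerm hp hp0 ht (n + 1) (n + 1)
    have hright := one_sub_zpow_mul_bilateralSum_thetaTerm hp hp0 (inv_ne_zero ht) (n + 1) n
    rw [add_sub_cancel_right] at hleft hright
    rw [bilateralSum_thetaTerm_swap _ t p n] at hleft
    rw [bilateralSum_thetaTerm_swap _ t⁻¹ p n, inv_inv] at hright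
    have hexp : p ^ (2 * (n + 1 : ℤ) - 1) = p * (p ^ 2) ^ n := by
      rw [← pow_mul, ← pow_succ', ← zpow_natCast]
      push_cast
      ring_nf
    calc _ = qPoch (p ^ 2) (p ^ 2) (2 * n) * ((1 - (p ^ 2) ^ (n + 1 + n : ℤ)) *
          ((1 - (p ^ 2) ^ (n + 1 + (n + 1) : ℤ)) *
            bilateralSum (p ^ 2) (thetaTerm t p) (n + 1) (n + 1))) := by
          rw [mul_add_one, qPoch_succ, qPoch_succ]
          norm_cast
          ring
      _ = (1 - t * (p * (p ^ 2) ^ n)) * (1 - t⁻¹ * (p * (p ^ 2) ^ n)) *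
          (qPoch (p ^ 2) (p ^ 2) (2 * n) * bilateralSum (p ^ 2) (thetaTerm t p) n n) := by
          rw [hleft, mul_left_comm _ (1 - t * _), hright, hexp]
          ring
      _ = _ := by
          rw [ih, qPoch_succ, qPoch_succ]
          ring

theorem tsum_thetaTerm (hp : ‖p‖ < 1) (hp0 : p ≠ 0) (ht : t ≠ 0) :
    ∑' r, thetaTerm t p r =
      qPochInf (p ^ 2) (p ^ 2) * qPochInf (t * p) (p ^ 2) * qPochInf (t⁻¹ * p) (p ^ 2) := by
  have hq := norm_pow_lt_one hp two_ne_zero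
  have hP := qPochInf_self_ne_zero hq
  have hdouble : Tendsto (fun n : ℕ => 2 * n) atTop atTop :=
    tendsto_id.const_mul_atTop' two_pos
  have hlim := (((tendsto_qPoch hq (p ^ 2)).comp hdouble).mul
    (tendsto_bilateralSum hq (summable_norm_thetaTerm ht hp0 hp))).congr
    (qPoch_mul_bilateralSum_thetaTerm (not_isOfFinOrder_of_norm_lt_one hp) hp0 ht)
  have hprod := tendsto_nhds_unique hlim
    ((tendsto_qPoch hq (t * p)).mul (tendsto_qPoch hq (t⁻¹ * p)))
  rw [mul_assoc, ← hprod]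
  field_simp

end Theta

section BaileyPair

variable {q t : ℂ}

/-- The passage from parameter `q` to parameter `1`: the two sides differ by a bilateral sum whose
coefficients are antisymmetric under `r ↦ -1 - r`. -/
lemma bilateralSum_thetaTerm_mul_self (hq : ¬IsOfFinOrder q) (hq0 : q ≠ 0) (ht : t ≠ 0) (n : ℤ) :
    bilateralSum q (thetaTerm t (t * q)) n (n + 1) = bilateralSum q (thetaTerm t (t * q)) n n := by
  have htwist (r : ℤ) : thetaTerm t (t * q) r * q ^ r = thetaTerm (t * q) (t * q) r := by
    rw [thetaTerm, thetaTerm, mul_zpow t q r]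
    ring
  have hzero := bilateralSum_eq_zero_of_antisymm (q := q) (-1)
    (thetaTerm_self_antisymm (mul_ne_zero ht hq0)) n
  have hrec := bilateralSum_sub_one_right hq hq0 (thetaTerm t (t * q)) n (n + 1)
  rw [sub_neg_eq_add] at hzero
  simp only [htwist] at hrec
  rw [hzero, mul_zero, add_zero, add_sub_cancel_right] at hrec
  exact hrec.symm

lemma bilateralSum_thetaTerm_one (hq : ¬IsOfFinOrder q) (hq0 : q ≠ 0) (n : ℕ) :
    bilateralSum q (thetaTerm 1 q) n n = invQPoch (q ^ 2) n := by
  have hsq : ¬IsOfFinOrder (q ^ 2) := by simpa [isOfFinOrder_pow] using hq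
  induction n with
  | zero => simp [bilateralSum_zero_zero, thetaTerm_zero, invQPoch_zero]
  | succ n ih =>
    have hshift (r : ℤ) : q ^ ((n + 1 : ℕ) - (r + 1) : ℤ) * thetaTerm 1 q (r + 1) =
        -q ^ (n + 1) * thetaTerm q q r := by
      have hexp : q ^ ((n + 1 : ℕ) - (r + 1) : ℤ) * q ^ (2 * r + 1) = q ^ (n + 1) * q ^ r := by
        rw [← zpow_add₀ hq0, ← zpow_natCast, ← zpow_add₀ hq0]
        congr 1
        ring
      rw [thetaTerm_add_one one_ne_zero hq0, thetaTerm, thetaTerm, one_zpow]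
      linear_combination -(-1) ^ r * q ^ (r ^ 2) * hexp
    have hzero := bilateralSum_eq_zero_of_antisymm (q := q) (-1) (thetaTerm_self_antisymm hq0) n
    have hself := bilateralSum_thetaTerm_mul_self hq hq0 one_ne_zero n
    have hrec := one_sub_zpow_mul_bilateralSum hq hq0 (thetaTerm 1 q) (n + 1 : ℕ) (n + 1 : ℕ)
    have hinv := one_sub_zpow_mul_invQPoch hsq (n + 1 : ℕ)
    rw [sub_neg_eq_add] at hzero
    rw [one_mul] at hself
    simp only [hshift, bilateralSum_add, bilateralSum_const_mul] at hrec
    rw [Nat.cast_succ, add_sub_cancel_right] at hrec hinv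
    rw [hzero, hself, mul_zero, add_zero, ih, ← hinv] at hrec
    have hpow : q ^ (n + 1 + (n + 1) : ℤ) = (q ^ 2) ^ (n + 1 : ℤ) := by
      rw [zpow_add₀ hq0, ← mul_zpow, sq]
    have hfactor : 1 - (q ^ 2) ^ (n + 1 : ℤ) ≠ 0 := by
      exact_mod_cast one_sub_pow_succ_ne_zero hsq n
    rw [hpow] at hrec
    rw [Nat.cast_succ]
    exact mul_left_cancel₀ hfactor hrec

theorem invQPoch_sq_eq_bilateralSum (hq : ¬IsOfFinOrder q) (hq0 : q ≠ 0) (n : ℕ) :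
    invQPoch (q ^ 2) n = bilateralSum q (thetaTerm 1 q) n (n + 1) := by
  rw [← bilateralSum_thetaTerm_one hq hq0]
  simpa only [one_mul] using (bilateralSum_thetaTerm_mul_self hq hq0 one_ne_zero n).symm

lemma tendsto_tsum_pow_sq_mul_bilateralSum (hq : ‖q‖ < 1) {α : ℤ → ℂ}
    (hα : Summable fun r => ‖α r‖) :
    Tendsto (fun N : ℕ => ∑' n : ℕ, q ^ (n ^ 2) * invQPoch q (N - n) * bilateralSum q α n n) atTop
      (𝓝 (∑' n : ℕ, q ^ (n ^ 2) * (qPochInf q q)⁻¹ * bilateralSum q α n n)) := by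
  obtain ⟨C, hC⟩ := exists_norm_invQPoch_le hq
  have hC0 := (norm_nonneg _).trans (hC 0)
  have hgeom := summable_geometric_of_lt_one (norm_nonneg q) hq
  refine tendsto_tsum_of_dominated_convergence
    ((hgeom.mul_right C).mul_right ((∑' r, ‖α r‖) * (C * C))) (fun n => ?_)
    (Eventually.of_forall fun N n => ?_)
  · exact ((tendsto_invQPoch_natCast_sub hq n).const_mul _).mul_const _
  · rw [norm_mul, norm_mul]
    gcongr
    exacts [norm_pow_le_of_le hq.le (Nat.le_self_pow two_ne_zero n), hC _,
      norm_bilateralSum_le hC hα _ _]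

theorem tsum_pow_sq_mul_bilateralSum (hq : ‖q‖ < 1) (hq0 : q ≠ 0) {α : ℤ → ℂ}
    (hα : Summable fun r => ‖α r‖) :
    ∑' n : ℕ, q ^ (n ^ 2) * bilateralSum q α n n =
      (∑' r, q ^ (r ^ 2) * α r) * (qPochInf q q)⁻¹ := by
  have hα' : Summable fun r : ℤ => ‖q ^ (r ^ 2) * α r‖ :=
    hα.of_nonneg_of_le (fun r => norm_nonneg _) fun r => by
      rw [norm_mul]
      exact mul_le_of_le_one_left (norm_nonneg _) (norm_zpow_sq_le_one hq.le r)
  have hfinite (N : ℕ) :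
      ∑' n : ℕ, q ^ (n ^ 2) * invQPoch q (N - n) * bilateralSum q α n n =
        bilateralSum q (fun r => q ^ (r ^ 2) * α r) N N := by
    simpa only [Nat.cast_zero, zero_mul, add_zero] using
      bailey_lemma_nat (not_isOfFinOrder_of_norm_lt_one hq) hq0 α zero_le_one N
  have hlim := (tendsto_tsum_pow_sq_mul_bilateralSum hq hα).congr hfinite
  have heq := tendsto_nhds_unique hlim (tendsto_bilateralSum hq hα')
  simp only [mul_right_comm _ (qPochInf q q)⁻¹, tsum_mul_right] at heq
  rw [← mul_assoc] at heq
  exact mul_right_cancel₀ (inv_ne_zero (qPochInf_self_ne_zero hq)) heq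

end BaileyPair

section Partition

variable {k : ℕ}

/-- The partition obtained by removing the largest part. -/
def PartK.tail (l : PartK (k + 1)) : PartK k :=
  ⟨fun i => l.1 (i + 1), fun _ _ hij => l.2.1 (Nat.succ_le_succ hij),
    fun i hi => l.2.2 (i + 1) (Nat.succ_le_succ hi)⟩

lemma PartK.tail_apply (l : PartK (k + 1)) (i : ℕ) : l.tail.1 i = l.1 (i + 1) := rfl

instance : Unique (PartK 0) where
  default := ⟨0, antitone_const, fun _ _ => rfl⟩
  uniq l := Subtype.ext (funext fun i => l.2.2 i i.zero_le)

lemma PartK.head_tail_injective : Function.Injective fun l : PartK (k + 1) => (l.1 0, l.tail) := by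
  intro l l' h
  obtain ⟨hhead, htail⟩ := Prod.ext_iff.1 h
  refine Subtype.ext (funext fun i => ?_)
  cases i with
  | zero => exact hhead
  | succ i => exact congrFun (congrArg Subtype.val htail) i

lemma PartK.exists_head_tail_eq {n : ℕ} {m : PartK k} (h : m.1 0 ≤ n) :
    ∃ l : PartK (k + 1), (l.1 0, l.tail) = (n, m) := by
  refine ⟨⟨fun i => i.casesOn n m.1, antitone_nat_of_succ_le fun i => ?_, fun i hi => ?_⟩, rfl⟩
  · cases i with
    | zero => exact h
    | succ i => exact m.2.1 i.le_succ
  · obtain ⟨i, rfl⟩ : ∃ j, i = j + 1 := ⟨i - 1, by omega⟩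
    exact m.2.2 i (by omega)

lemma PartK.tsum_succ {E : Type*} [NormedAddCommGroup E] [CompleteSpace E]
    {f : ℕ × PartK k → E} (hf : Summable f) (hzero : ∀ n m, n < m.1 0 → f (n, m) = 0) :
    ∑' l : PartK (k + 1), f (l.1 0, l.tail) = ∑' n, ∑' m, f (n, m) := by
  rw [← hf.tsum_prod, ← PartK.head_tail_injective.tsum_eq]
  refine Function.support_subset_iff'.2 fun ⟨n, m⟩ hnm => hzero n m ?_
  by_contra! h
  exact hnm (PartK.exists_head_tail_eq h)

lemma wtK_succ (l : PartK (k + 1)) : wtK (k + 1) l = l.1 0 + wtK k l.tail := by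
  rw [wtK, Finset.sum_range_succ', add_comm]
  rfl

lemma summable_pow_wtK {x : ℝ} (hx0 : 0 ≤ x) (hx1 : x < 1) (k : ℕ) :
    Summable fun l : PartK k => x ^ wtK k l := by
  induction k with
  | zero => exact (hasSum_unique _).summable
  | succ k ih =>
    have hprod := (summable_geometric_of_lt_one hx0 hx1).mul_of_nonneg ih
      (fun n => pow_nonneg hx0 n) (fun m => pow_nonneg hx0 _)
    simpa only [Function.comp_def, wtK_succ, pow_add] using
      hprod.comp_injective PartK.head_tail_injective

end Partition

section BaileyChain

variable {q : ℂ} {β : ℕ → ℂ}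

/-- The weight of the chain `n ≥ m_1 ≥ ⋯ ≥ m_k` in the `k`-fold Bailey transform, relative to `q`,
of the sequence `β`. The entry `n` is not part of the partition `m`, and the weight is defined, but
`0`, when `n < m_1`. -/
noncomputable def chainWeight (q : ℂ) (β : ℕ → ℂ) : (k : ℕ) → ℕ → PartK k → ℂ
  | 0, n, _ => β n
  | k + 1, n, m =>
    q ^ (m.1 0 ^ 2 + m.1 0) * invQPoch q (n - m.1 0) * chainWeight q β k (m.1 0) m.tail

lemma chainWeight_eq_zero {k n : ℕ} {m : PartK k} (h : n < m.1 0) :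
    chainWeight q β k n m = 0 := by
  cases k with
  | zero => exact absurd (m.2.2 0 le_rfl) (Nat.ne_zero_of_lt h)
  | succ k => rw [chainWeight, invQPoch_of_neg q (by omega), mul_zero, zero_mul]

lemma norm_chainWeight_le {B C : ℝ} (hq : ‖q‖ < 1) (hβ : ∀ n, ‖β n‖ ≤ B)
    (hC : ∀ m, ‖invQPoch q m‖ ≤ C) (k n : ℕ) (m : PartK k) :
    ‖chainWeight q β k n m‖ ≤ C ^ k * B * ‖q‖ ^ wtK k m := by
  induction k generalizing n with
  | zero => simpa [chainWeight, wtK] using hβ n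
  | succ k ih =>
    have hC0 := (norm_nonneg _).trans (hC 0)
    calc _ ≤ ‖q‖ ^ m.1 0 * C * (C ^ k * B * ‖q‖ ^ wtK k m.tail) := by
          rw [chainWeight, norm_mul, norm_mul]
          gcongr
          exacts [norm_pow_le_of_le hq.le (Nat.le_add_left _ _), hC _, ih _ _]
      _ = _ := by
          rw [wtK_succ]
          ring

lemma tsum_mul_chainWeight (hq : ‖q‖ < 1) {B D : ℝ} (hβ : ∀ n, ‖β n‖ ≤ B) {φ : ℕ → ℂ}
    (hφ : ∀ n, ‖φ n‖ ≤ D * ‖q‖ ^ n) (k : ℕ) :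
    ∑' l : PartK (k + 1), φ (l.1 0) * chainWeight q β k (l.1 0) l.tail =
      ∑' n, φ n * ∑' m, chainWeight q β k n m := by
  obtain ⟨C, hC⟩ := exists_norm_invQPoch_le hq
  have hbound := ((summable_geometric_of_lt_one (norm_nonneg q) hq).mul_left D).mul_of_nonneg
    ((summable_pow_wtK (norm_nonneg q) hq k).mul_left (C ^ k * B))
    (fun n => (norm_nonneg _).trans (hφ n))
    (fun m => (norm_nonneg _).trans (norm_chainWeight_le hq hβ hC k 0 m))
  have hsummable : Summable fun x : ℕ × PartK k => φ x.1 * chainWeight q β k x.1 x.2 := by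
    refine hbound.of_norm_bounded fun x => ?_
    rw [norm_mul]
    exact mul_le_mul (hφ _) (norm_chainWeight_le hq hβ hC k _ _) (norm_nonneg _)
      ((norm_nonneg _).trans (hφ _))
  rw [PartK.tsum_succ hsummable fun n m h => by rw [chainWeight_eq_zero h, mul_zero]]
  simp only [tsum_mul_left]

theorem tsum_chainWeight_bilateralSum (hq : ‖q‖ < 1) (hq0 : q ≠ 0) {α : ℤ → ℂ}
    (hα : Summable fun r => ‖α r‖) (k n : ℕ) :
    ∑' m, chainWeight q (fun n => bilateralSum q α n (n + 1)) k n m =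
      bilateralSum q (fun r => (q ^ (r ^ 2 + r)) ^ k * α r) n (n + 1) := by
  induction k generalizing n with
  | zero => simp [chainWeight]
  | succ k ih =>
    obtain ⟨C, hC⟩ := exists_norm_invQPoch_le hq
    have hφ (j : ℕ) : ‖q ^ (j ^ 2 + j) * invQPoch q (n - j)‖ ≤ C * ‖q‖ ^ j := by
      rw [norm_mul, mul_comm C]
      gcongr
      exacts [norm_pow_le_of_le hq.le (Nat.le_add_left _ _), hC _]
    have hstep := bailey_lemma_nat (not_isOfFinOrder_of_norm_lt_one hq) hq0
      (fun r => (q ^ (r ^ 2 + r)) ^ k * α r) le_rfl n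
    simp only [Nat.cast_one, one_mul] at hstep
    simp only [chainWeight]
    rw [tsum_mul_chainWeight hq (fun n => norm_bilateralSum_le hC hα n (n + 1)) hφ]
    simp only [ih, pow_succ' _ k, mul_assoc] at hstep ⊢
    exact hstep

lemma chainWeight_tail (q : ℂ) (β : ℕ → ℂ) (k : ℕ) (l : PartK (k + 1)) :
    chainWeight q β k (l.1 0) l.tail =
      (∏ i ∈ Finset.range k, q ^ (l.1 (i + 1) ^ 2 + l.1 (i + 1)) *
        invQPoch q (l.1 i - l.1 (i + 1))) * β (l.1 k) := by
  induction k with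
  | zero => simp [chainWeight]
  | succ k ih =>
    rw [Finset.prod_range_succ', chainWeight, ih]
    simp only [PartK.tail_apply, zero_add]
    ring

end BaileyChain

section Summand

lemma wtK_add_n2K_sub (k : ℕ) (l : PartK (k + 1)) :
    wtK (k + 1) l + n2K (k + 1) l - l.1 0 =
      l.1 0 ^ 2 + ∑ i ∈ Finset.range k, (l.1 (i + 1) ^ 2 + l.1 (i + 1)) := by
  rw [wtK, n2K, Finset.sum_range_succ', Finset.sum_range_succ', Finset.sum_add_distrib]
  omega

lemma inv_pochK (q : ℂ) (k : ℕ) (l : PartK (k + 1)) :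
    (pochK q q (k + 1) l)⁻¹ =
      (∏ i ∈ Finset.range k, invQPoch q (l.1 i - l.1 (i + 1))) * (qPoch q q (l.1 k))⁻¹ := by
  have hfactor (i : ℕ) :
      invQPoch q (l.1 i - l.1 (i + 1)) = (qPoch q q (l.1 i - l.1 (i + 1)))⁻¹ := by
    rw [← invQPoch_natCast, Nat.cast_sub (l.2.1 i.le_succ)]
  rw [pochK, Finset.prod_range_succ, l.2.2 (k + 1) le_rfl, Nat.sub_zero, mul_inv,
    ← Finset.prod_inv_distrib]
  simp only [hfactor]

lemma summand_eq_chainWeight (q : ℂ) (k : ℕ) (l : PartK (k + 1)) :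
    q ^ (wtK (k + 1) l + n2K (k + 1) l - l.1 0) /
        (qPoch (-q) q (l.1 k) * pochK q q (k + 1) l) =
      q ^ (l.1 0 ^ 2) * chainWeight q (fun n => invQPoch (q ^ 2) n) k (l.1 0) l.tail := by
  rw [chainWeight_tail, Finset.prod_mul_distrib, Finset.prod_pow_eq_pow_sum, wtK_add_n2K_sub,
    pow_add, div_eq_mul_inv, mul_inv, inv_pochK, ← inv_qPoch_neg_mul_qPoch, mul_inv]
  ring

lemma tsum_summand_of_q_eq_zero (k : ℕ) :
    ∑' l : PartK (k + 1), (0 : ℂ) ^ (wtK (k + 1) l + n2K (k + 1) l - l.1 0) /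
      (qPoch (-0) 0 (l.1 k) * pochK 0 0 (k + 1) l) = 1 := by
  rw [tsum_eq_single ⟨0, antitone_const, fun _ _ => rfl⟩]
  · simp [wtK, n2K, qPoch, pochK]
  · intro l hl
    have hhead : l.1 0 ≠ 0 := fun h =>
      hl (Subtype.ext (funext fun i => Nat.le_zero.1 ((l.2.1 i.zero_le).trans_eq h)))
    rw [summand_eq_chainWeight, zero_pow (pow_ne_zero _ hhead), zero_mul]

end Summand

section Evaluation

variable {q : ℂ}

lemma pow_mul_thetaTerm_one (hq0 : q ≠ 0) (j : ℕ) (r : ℤ) :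
    (q ^ (r ^ 2 + r)) ^ j * thetaTerm 1 q r = thetaTerm (q ^ j) (q ^ (j + 1)) r := by
  rw [thetaTerm, thetaTerm, one_zpow, mul_one, pow_succ q j, mul_zpow, zpow_add₀ hq0, mul_pow,
    ← zpow_natCast, ← zpow_natCast, ← zpow_natCast, ← zpow_mul, ← zpow_mul, ← zpow_mul,
    ← zpow_mul, mul_comm (r ^ 2) (j : ℤ), mul_comm r (j : ℤ)]
  ring

lemma zpow_sq_mul_thetaTerm (q t p : ℂ) (r : ℤ) :
    q ^ (r ^ 2) * thetaTerm t p r = thetaTerm t (p * q) r := by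
  rw [thetaTerm, thetaTerm, mul_zpow]
  ring

lemma tsum_chainWeight_invQPoch_sq (hq : ‖q‖ < 1) (hq0 : q ≠ 0) (j n : ℕ) :
    ∑' m, chainWeight q (fun n => invQPoch (q ^ 2) n) j n m =
      bilateralSum q (thetaTerm (q ^ j) (q ^ (j + 1))) n n := by
  have hq' := not_isOfFinOrder_of_norm_lt_one hq
  simp only [invQPoch_sq_eq_bilateralSum hq' hq0]
  rw [tsum_chainWeight_bilateralSum hq hq0 (summable_norm_thetaTerm one_ne_zero hq0 hq)]
  simp only [pow_mul_thetaTerm_one hq0]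
  exact bilateralSum_thetaTerm_mul_self hq' hq0 (pow_ne_zero j hq0) n

lemma tsum_pow_sq_mul_chainWeight (hq : ‖q‖ < 1) (hq0 : q ≠ 0) (j : ℕ) :
    ∑' l : PartK (j + 1),
        q ^ (l.1 0 ^ 2) * chainWeight q (fun n => invQPoch (q ^ 2) n) j (l.1 0) l.tail =
      (∑' r, thetaTerm (q ^ j) (q ^ (j + 2)) r) * (qPochInf q q)⁻¹ := by
  obtain ⟨C, hC⟩ := exists_norm_invQPoch_le (norm_pow_lt_one hq two_ne_zero)
  rw [tsum_mul_chainWeight hq (fun n => hC n) (φ := fun n => q ^ (n ^ 2)) (D := 1)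
    fun n => by simpa only [one_mul] using 
      norm_pow_le_of_le hq.le (Nat.le_self_pow two_ne_zero n)]
  simp only [tsum_chainWeight_invQPoch_sq hq hq0]
  rw [tsum_pow_sq_mul_bilateralSum hq hq0 (summable_norm_thetaTerm (pow_ne_zero j hq0)
    (pow_ne_zero _ hq0) (norm_pow_lt_one hq j.succ_ne_zero))]
  simp only [zpow_sq_mul_thetaTerm, ← pow_succ]

end Evaluation

/-- Identity (24): for `k ≥ 1`, `|q| < 1`,
`Σ_{l(λ)≤k} q^{|λ|+n_2(λ)-λ_1} / ((-q;q)_{λ_k} (q;q)_λ)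
  = (q^{2k+2},q^{2k},q^2;q^{2k+2})_∞ / (q;q)_∞`. -/
theorem rr_type_24 (k : ℕ) (hk : 1 ≤ k) (q : ℂ) (hq : ‖q‖ < 1) :
    ∑' lam : PartK k,
        q ^ (wtK k lam + n2K k lam - lam.1 0) /
          (qPoch (-q) q (lam.1 (k - 1)) * pochK q q k lam)
      = qPochInf (q ^ (2 * k + 2)) (q ^ (2 * k + 2)) *
          qPochInf (q ^ (2 * k)) (q ^ (2 * k + 2)) *
          qPochInf (q ^ 2) (q ^ (2 * k + 2)) / qPochInf q q := by
  obtain ⟨j, rfl⟩ : ∃ j, k = j + 1 := ⟨k - 1, by omega⟩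
  rw [Nat.add_sub_cancel]
  rcases eq_or_ne q 0 with rfl | hq0
  · rw [tsum_summand_of_q_eq_zero]
    simp [qPochInf]
  have hj := pow_ne_zero j hq0
  have hbase : (q ^ (j + 2)) ^ 2 = q ^ (2 * (j + 1) + 2) := by ring
  have hmul : q ^ j * q ^ (j + 2) = q ^ (2 * (j + 1)) := by ring
  have hinv : (q ^ j)⁻¹ * q ^ (j + 2) = q ^ 2 := by rw [pow_add, inv_mul_cancel_left₀ hj]
  rw [tsum_congr (summand_eq_chainWeight q j), tsum_pow_sq_mul_chainWeight hq hq0,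
    tsum_thetaTerm (norm_pow_lt_one hq (j + 1).succ_ne_zero) (pow_ne_zero _ hq0) hj, hbase, hmul,
    hinv, div_eq_mul_inv]
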